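/- Let z, x ∈ X^n, let F be a class of functions X → Y, let V ⊆ F be nonempty with f ∈ V, and suppose the pair (h*, A*) minimizes (h, A) ↦ L_x(V, h, A) jointly over all h ∈ F and all subsets A ⊆ {1,…,n}. Then ℓ_x(f, h*, A*) ≤ (c/n)·|{i : x_i ≠ z_i}| + L_z(V, f). -/

import Mathlib

open Finset

/-- Selective test loss with abstention set `A`. -/
noncomputable def selLoss {X Y : Type*} (ℓ : Y → Y → ℝ) (c : ℝ) {n : ℕ}
    (x : Fin n → X) (f h : X → Y) (A : Finset (Fin n)) : ℝ :=
  c / (n : ℝ) * (A.card : ℝ) + (1 / (n : ℝ)) * ∑ i ∈ Aᶜ, ℓ (f (x i)) (h (x i))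

/-- `L_x(V,h,A) = sup_{g ∈ V} ℓ_x(g,h,A)`. -/
noncomputable def worstSelLoss {X Y : Type*} (ℓ : Y → Y → ℝ) (c : ℝ) {n : ℕ}
    (x : Fin n → X) (V : Set (X → Y)) (h : X → Y) (A : Finset (Fin n)) : ℝ :=
  ⨆ g ∈ V, selLoss ℓ c x g h A

/-- `L_z(V,h) = sup_{g ∈ V} (1/n)·Σ_i ℓ(g(z_i), h(z_i))`. -/
noncomputable def worstLoss {X Y : Type*} (ℓ : Y → Y → ℝ) {n : ℕ}
    (z : Fin n → X) (V : Set (X → Y)) (h : X → Y) : ℝ :=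
  ⨆ g ∈ V, (1 / (n : ℝ)) * ∑ i, ℓ (g (z i)) (h (z i))

lemma aux_le_biSup {G : Type*} (V : Set G) (u : G → ℝ) (B : ℝ) (h0 : 0 ≤ B)
    (hB : ∀ g, u g ≤ B) (g : G) (hg : g ∈ V) : u g ≤ ⨆ g ∈ V, u g := by
  have hbd : BddAbove (Set.range fun g => ⨆ (_ : g ∈ V), u g) := by
    refine ⟨B, ?_⟩
    rintro _ ⟨k, rfl⟩
    exact Real.iSup_le (fun _ => hB k) h0
  have h1 := le_ciSup hbd g
  have h2 : (⨆ (_ : g ∈ V), u g) = u g := ciSup_pos hg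
  simp only [h2] at h1
  exact h1

theorem stmt_1 {X Y : Type*} [Countable X] [DecidableEq X]
    (ℓ : Y → Y → ℝ) (hℓ : ∀ y y', ℓ y y' ∈ Set.Icc (0 : ℝ) 1)
    (c : ℝ) (hc : c ∈ Set.Ioc (0 : ℝ) 1) {n : ℕ} (hn : 0 < n)
    (z x : Fin n → X) (F : Set (X → Y)) (V : Set (X → Y)) (hVF : V ⊆ F)
    (hV : V.Nonempty) (f : X → Y) (hf : f ∈ V)
    (hstar : X → Y) (hhF : hstar ∈ F) (Astar : Finset (Fin n))
    (hmin : ∀ h ∈ F, ∀ A : Finset (Fin n),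
      worstSelLoss ℓ c x V hstar Astar ≤ worstSelLoss ℓ c x V h A) :
    selLoss ℓ c x f hstar Astar ≤
      c / (n : ℝ) * ((univ.filter fun i => x i ≠ z i).card : ℝ) + worstLoss ℓ z V f := by
  obtain ⟨hc0, hc1⟩ := hc
  have hn' : (0 : ℝ) < n := by exact_mod_cast hn
  have hsum : ∀ (w : Fin n → X) (g h : X → Y) (A : Finset (Fin n)),
      ∑ i ∈ A, ℓ (g (w i)) (h (w i)) ≤ (n : ℝ) := by
    intro w g h A
    calc ∑ i ∈ A, ℓ (g (w i)) (h (w i)) ≤ ∑ i ∈ A, (1 : ℝ) :=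
          Finset.sum_le_sum fun i _ => (hℓ _ _).2
      _ = (A.card : ℝ) := by simp
      _ ≤ n := by
          have := Finset.card_le_univ A
          rw [Fintype.card_fin] at this
          exact_mod_cast this
  have hone : ∀ (w : Fin n → X) (g h : X → Y) (A : Finset (Fin n)),
      (1 / (n : ℝ)) * ∑ i ∈ A, ℓ (g (w i)) (h (w i)) ≤ 1 := by
    intro w g h A
    rw [one_div, inv_mul_le_iff₀ hn', mul_one]
    exact hsum w g h A
  have hnon : ∀ (w : Fin n → X) (g h : X → Y) (A : Finset (Fin n)),
      0 ≤ (1 / (n : ℝ)) * ∑ i ∈ A, ℓ (g (w i)) (h (w i)) := by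
    intro w g h A
    exact mul_nonneg (by positivity) (Finset.sum_nonneg fun i _ => (hℓ _ _).1)
  have hW : ∀ g ∈ V, (1 / (n : ℝ)) * ∑ i, ℓ (g (z i)) (f (z i)) ≤ worstLoss ℓ z V f :=
    fun g hg => aux_le_biSup V (fun g => (1 / (n : ℝ)) * ∑ i, ℓ (g (z i)) (f (z i))) 1
      zero_le_one (fun g => hone z g f univ) g hg
  have hS : selLoss ℓ c x f hstar Astar ≤ worstSelLoss ℓ c x V hstar Astar := by
    refine aux_le_biSup V (fun g => selLoss ℓ c x g hstar Astar)
      (c / (n : ℝ) * (Astar.card : ℝ) + 1) (by positivity) (fun g => ?_) f hf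
    unfold selLoss
    have := hone x g hstar Astarᶜ
    linarith
  have hW0 : 0 ≤ worstLoss ℓ z V f := (hnon z f f univ).trans (hW f hf)
  refine (hS.trans (hmin f (hVF hf) (univ.filter fun i => x i ≠ z i))).trans ?_
  refine Real.iSup_le (fun g => Real.iSup_le (fun hg => ?_) (by positivity)) (by positivity)
  unfold selLoss
  refine add_le_add le_rfl (le_trans ?_ (hW g hg))
  refine mul_le_mul_of_nonneg_left ?_ (by positivity)
  calc _ = ∑ i ∈ (univ.filter fun i => x i ≠ z i)ᶜ, ℓ (g (z i)) (f (z i)) := by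
        refine Finset.sum_congr rfl fun i hi => ?_
        have : x i = z i := by simpa using hi
        rw [this]
    _ ≤ _ := Finset.sum_le_sum_of_subset_of_nonneg (Finset.subset_univ _)
        fun i _ _ => (hℓ _ _).1
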